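/- Let n ≥ 2, let q be the Lorentzian quadratic form q(x) = 2x₁x_{n+1} + x₂² + ⋯ + xₙ² on ℝ^{n+1}, and let ρ be a continuous representation of O(1,n) on a finite-dimensional real normed vector space V. Let w ∈ V be a vector fixed by the Cartan subgroup A = {a^s : s ∈ ℝ}, i.e. ρ(a^s)w = w for all s ∈ ℝ. Then the orbit {ρ(g)w : g ∈ O(1,n)} is a closed subset of V. -/

import Mathlib

open Matrix Filter Topology Bornology

noncomputable section

/-- The Lorentzian quadratic form `q(x) = 2 x₁ x_{n+1} + x₂² + ⋯ + xₙ²` on `ℝ^{n+1}`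
(coordinates indexed by `Fin (n+1)`, so `x₁` is `x 0` and `x_{n+1}` is `x (Fin.last n)`). -/
def lorQ (n : ℕ) (x : Fin (n + 1) → ℝ) : ℝ :=
  2 * x 0 * x (Fin.last n) +
    ∑ i : Fin (n + 1), if i ≠ 0 ∧ i ≠ Fin.last n then x i ^ 2 else 0

/-- The polar bilinear form `B` of `lorQ`. -/
def lorB (n : ℕ) (x y : Fin (n + 1) → ℝ) : ℝ :=
  x 0 * y (Fin.last n) + x (Fin.last n) * y 0 +
    ∑ i : Fin (n + 1), if i ≠ 0 ∧ i ≠ Fin.last n then x i * y i else 0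

/-- The Lorentz group `O(1,n)`: linear automorphisms of `ℝ^{n+1}` preserving `lorQ`. -/
def LorentzGrp (n : ℕ) : Subgroup (GL (Fin (n + 1)) ℝ) where
  carrier := {g | ∀ x, lorQ n ((g : Matrix (Fin (n + 1)) (Fin (n + 1)) ℝ).mulVec x) = lorQ n x}
  one_mem' := by intro x; simp
  mul_mem' := by
    intro a b ha hb x
    have h : ((a * b : GL (Fin (n + 1)) ℝ) : Matrix (Fin (n + 1)) (Fin (n + 1)) ℝ).mulVec x
        = (a : Matrix (Fin (n + 1)) (Fin (n + 1)) ℝ).mulVec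
            ((b : Matrix (Fin (n + 1)) (Fin (n + 1)) ℝ).mulVec x) := by
      rw [Matrix.mulVec_mulVec]; rfl
    rw [h, ha, hb]
  inv_mem' := by
    intro g hg x
    have h : (g : Matrix (Fin (n + 1)) (Fin (n + 1)) ℝ).mulVec
        ((↑g⁻¹ : Matrix (Fin (n + 1)) (Fin (n + 1)) ℝ).mulVec x) = x := by
      rw [Matrix.mulVec_mulVec]
      have : (g : Matrix (Fin (n + 1)) (Fin (n + 1)) ℝ) * (↑g⁻¹ : Matrix (Fin (n + 1)) (Fin (n + 1)) ℝ)
          = (1 : Matrix (Fin (n + 1)) (Fin (n + 1)) ℝ) := by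
        rw [← Units.val_mul, mul_inv_cancel, Units.val_one]
      rw [this, Matrix.one_mulVec]
    calc lorQ n ((↑g⁻¹ : Matrix (Fin (n + 1)) (Fin (n + 1)) ℝ).mulVec x)
        = lorQ n ((g : Matrix (Fin (n + 1)) (Fin (n + 1)) ℝ).mulVec
            ((↑g⁻¹ : Matrix (Fin (n + 1)) (Fin (n + 1)) ℝ).mulVec x)) := (hg _).symm
      _ = lorQ n x := by rw [h]

/-- The action of an element of `O(1,n)` on a vector of `ℝ^{n+1}`. -/
def lorAct {n : ℕ} (g : LorentzGrp n) (x : Fin (n + 1) → ℝ) : Fin (n + 1) → ℝ :=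
  ((g : GL (Fin (n + 1)) ℝ) : Matrix (Fin (n + 1)) (Fin (n + 1)) ℝ).mulVec x

/-- The base point `o = e₁ − e_{n+1}`, a timelike vector. -/
def basePt (n : ℕ) : Fin (n + 1) → ℝ := fun i =>
  if i = 0 then 1 else if i = Fin.last n then -1 else 0

/-- `u` is a limit direction of a subset `G` of `O(1,n)`: `u` is nonzero lightlike, and some
sequence `λ_k • g_k⁻¹(o)`, with `g_k ∈ G`, converges to `u`. -/
def IsLimitDirection (n : ℕ) (G : Set (LorentzGrp n)) (u : Fin (n + 1) → ℝ) : Prop :=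
  u ≠ 0 ∧ lorQ n u = 0 ∧
    ∃ (g : ℕ → LorentzGrp n) (lam : ℕ → ℝ), (∀ k, g k ∈ G) ∧
      Tendsto (fun k => lam k • lorAct (g k)⁻¹ (basePt n)) atTop (𝓝 u)

/-- A vector `v` is stable under `G ⊆ O(1,n)` if its `ρ`-orbit under `G` is bounded. -/
def IsStableVec {n : ℕ} {V : Type*} [NormedAddCommGroup V] [NormedSpace ℝ V]
    (ρ : LorentzGrp n →* (V →L[ℝ] V)) (G : Set (LorentzGrp n)) (v : V) : Prop :=
  IsBounded {w : V | ∃ g ∈ G, w = ρ g v}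

/-- `SO°(E)`: the identity component of the subgroup of `O(1,n)` of elements leaving `E`
invariant and fixing pointwise every vector orthogonal to `E`. -/
def SOIdComp (n : ℕ) (E : Submodule ℝ (Fin (n + 1) → ℝ)) : Set (LorentzGrp n) :=
  connectedComponentIn
    {g : LorentzGrp n |
      E.map ((g : GL (Fin (n + 1)) ℝ) : Matrix (Fin (n + 1)) (Fin (n + 1)) ℝ).mulVecLin = E ∧
      ∀ x : Fin (n + 1) → ℝ, (∀ e ∈ E, lorB n x e = 0) → lorAct g x = x} 1

lemma aux_seq {E : Type*} [NormedAddCommGroup E] (a b : ℕ → E) (q : ℝ) (hq0 : 0 ≤ q) (hq : q < 1)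
    (h : ∀ n, ‖a (n + 1)‖ ≤ q * ‖a n‖ + ‖b n‖) (hb : Tendsto b atTop (𝓝 0)) :
    Tendsto a atTop (𝓝 0) := by
  rw [Metric.tendsto_atTop]
  intro ε hε
  rw [Metric.tendsto_atTop] at hb
  obtain ⟨N, hN⟩ := hb (ε / 2 * (1 - q)) (by have : 0 < 1 - q := by linarith
                                             positivity)
  have key : ∀ j, ‖a (N + j)‖ ≤ q ^ j * ‖a N‖ + ε / 2 := by
    intro j
    induction j with
    | zero => simp; linarith
    | succ j ih =>
      have h1 := h (N + j)
      have h2 := hN (N + j) (by omega)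
      rw [dist_zero_right] at h2
      have h3 := mul_le_mul_of_nonneg_left ih hq0
      rw [← add_assoc, pow_succ]
      nlinarith
  have ht : Tendsto (fun j : ℕ => q ^ j * ‖a N‖) atTop (𝓝 0) := by
    simpa using (tendsto_pow_atTop_nhds_zero_of_lt_one hq0 hq).mul_const ‖a N‖
  obtain ⟨J, hJ⟩ := (Metric.tendsto_atTop.1 ht) (ε / 2) (by positivity)
  refine ⟨N + J, fun n hn => ?_⟩
  obtain ⟨j, rfl⟩ := Nat.exists_eq_add_of_le (show N ≤ n by omega)
  have h1 := hJ j (by omega)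
  rw [Real.dist_eq, sub_zero] at h1
  have h2 := key j
  rw [dist_zero_right]
  have := le_abs_self (q ^ j * ‖a N‖)
  linarith

lemma aux_lin {V : Type*} [NormedAddCommGroup V] [NormedSpace ℝ V] [FiniteDimensional ℝ V]
    (T : V →L[ℝ] V) (y : ℕ → V) (R : ℝ) (hy : ∀ k, ‖y k‖ ≤ R) (m : ℕ → ℕ)
    (hm : Tendsto m atTop atTop) (z : V)
    (h1 : Tendsto (fun k => (T ^ (m k)) (y k)) atTop (𝓝 z))
    (h2 : Tendsto (fun n : ℕ => (T ^ n) z) atTop (𝓝 0)) : z = 0 := by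
  have : FiniteDimensional ℂ (V →L[ℝ] ℂ) := FiniteDimensional.right ℝ ℂ (V →L[ℝ] ℂ)
  let S : Module.End ℂ (V →L[ℝ] ℂ) :=
    { toFun := fun l => l.comp T
      map_add' := fun a b => by ext; simp
      map_smul' := fun a b => by ext; simp }
  have hS : ∀ l : V →L[ℝ] ℂ, S l = l.comp T := fun l => rfl
  have hcomp : ∀ (l : V →L[ℝ] ℂ) (n : ℕ), l.comp (T ^ (n + 1)) = (S l).comp (T ^ n) := by
    intro l n
    rw [hS, pow_succ']
    rfl
  have small : ∀ μ : ℂ, ‖μ‖ < 1 → ∀ (j : ℕ) (l : V →L[ℝ] ℂ), ((S - algebraMap ℂ _ μ) ^ j) l = 0 →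
      Tendsto (fun n : ℕ => l.comp (T ^ n)) atTop (𝓝 0) := by
    intro μ hμ j
    induction j with
    | zero => intro l hl; simp at hl; subst hl; simp
    | succ j ih =>
      intro l hl
      rw [pow_succ] at hl
      have := ih ((S - algebraMap ℂ _ μ) l) hl
      refine aux_seq _ _ ‖μ‖ (norm_nonneg _) hμ (fun n => ?_) this
      have e : l.comp (T ^ (n + 1)) = μ • (l.comp (T ^ n)) +
          ((S - algebraMap ℂ _ μ) l).comp (T ^ n) := by
        rw [hcomp]
        ext v
        simp
      rw [e]
      refine (norm_add_le _ _).trans ?_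
      rw [norm_smul]
  have big : ∀ μ : ℂ, 1 ≤ ‖μ‖ → ∀ (j : ℕ) (l : V →L[ℝ] ℂ), ((S - algebraMap ℂ _ μ) ^ j) l = 0 →
      ∀ z : V, Tendsto (fun n : ℕ => (T ^ n) z) atTop (𝓝 0) → l z = 0 := by
    intro μ hμ j
    induction j with
    | zero => intro l hl; simp at hl; subst hl; simp
    | succ j ih =>
      intro l hl z hz
      rw [pow_succ] at hl
      have h0 := ih ((S - algebraMap ℂ _ μ) l) hl
      have hn : ∀ n : ℕ, l ((T ^ n) z) = μ ^ n * l z := by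
        intro n
        induction n with
        | zero => simp
        | succ n ihn =>
          have hz' : Tendsto (fun i : ℕ => (T ^ i) ((T ^ n) z)) atTop (𝓝 0) := by
            have := hz.comp (tendsto_add_atTop_nat n)
            refine this.congr fun i => ?_
            simp only [Function.comp, pow_add]
            rfl
          have := h0 _ hz'
          have e : l (T ((T ^ n) z)) - μ * l ((T ^ n) z) = 0 := this
          rw [sub_eq_zero] at e
          have e2 : (T ^ (n + 1)) z = T ((T ^ n) z) := by rw [pow_succ']; rfl
          rw [e2, e, ihn, pow_succ']
          ring
      by_contra hne
      have ht : Tendsto (fun n : ℕ => ‖l ((T ^ n) z)‖) atTop (𝓝 0) := by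
        have := (l.continuous.tendsto 0).comp hz
        simpa using this.norm
      have : ‖l z‖ ≤ 0 := by
        refine ge_of_tendsto' ht fun n => ?_
        rw [hn, norm_mul, norm_pow]
        exact le_mul_of_one_le_left (norm_nonneg _) (one_le_pow₀ hμ)
      exact hne (norm_le_zero_iff.1 this)
  have all : ∀ l : V →L[ℝ] ℂ, l z = 0 := by
    intro l
    have hl : l ∈ (⨆ μ : ℂ, S.maxGenEigenspace μ) := by
      rw [Module.End.iSup_maxGenEigenspace_eq_top]; trivial
    induction hl using Submodule.iSup_induction' with
    | mem μ l hl =>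
      rw [Module.End.mem_maxGenEigenspace] at hl
      obtain ⟨j, hj⟩ := hl
      rw [← Algebra.algebraMap_eq_smul_one] at hj
      rcases lt_or_ge ‖μ‖ 1 with hμ | hμ
      · have ht := (small μ hμ j l hj).comp hm
        have ha : Tendsto (fun k => l ((T ^ (m k)) (y k))) atTop (𝓝 (l z)) :=
          (l.continuous.tendsto z).comp h1
        have hb : Tendsto (fun k => l ((T ^ (m k)) (y k))) atTop (𝓝 0) := by
          rw [tendsto_zero_iff_norm_tendsto_zero] at ht ⊢
          have ht' := ht.mul_const R
          rw [zero_mul] at ht'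
          refine squeeze_zero (fun _ => norm_nonneg _) (fun k => ?_) ht'
          refine ((l.comp (T ^ (m k))).le_opNorm (y k)).trans ?_
          exact mul_le_mul_of_nonneg_left (hy k) (norm_nonneg _)
        exact tendsto_nhds_unique ha hb
      · exact big μ hμ j l hj z h2
    | zero => simp
    | add a b _ _ ha hb => simp [ha, hb]
  by_contra hz
  obtain ⟨f, hf⟩ := SeparatingDual.exists_ne_zero (R := ℝ) hz
  have := all (Complex.ofRealCLM.comp f)
  simp at this
  exact hf this

/-- The positive part of the form on the middle coordinates. -/
def midDot (n : ℕ) (x y : Fin (n + 1) → ℝ) : ℝ :=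
  ∑ i : Fin (n + 1), if i ≠ 0 ∧ i ≠ Fin.last n then x i * y i else 0

lemma midDot_add_right (n : ℕ) (x y z : Fin (n + 1) → ℝ) :
    midDot n x (y + z) = midDot n x y + midDot n x z := by
  unfold midDot
  rw [← Finset.sum_add_distrib]
  refine Finset.sum_congr rfl fun i _ => ?_
  split_ifs
  · simp; ring
  · simp

lemma midDot_smul_right (n : ℕ) (c : ℝ) (x y : Fin (n + 1) → ℝ) :
    midDot n x (c • y) = c * midDot n x y := by
  unfold midDot
  rw [Finset.mul_sum]
  refine Finset.sum_congr rfl fun i _ => ?_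
  split_ifs
  · simp; ring
  · simp

lemma midDot_comm (n : ℕ) (x y : Fin (n + 1) → ℝ) : midDot n x y = midDot n y x := by
  unfold midDot
  refine Finset.sum_congr rfl fun i _ => ?_
  split_ifs
  · ring
  · rfl

lemma midDot_add_left (n : ℕ) (x y z : Fin (n + 1) → ℝ) :
    midDot n (y + z) x = midDot n y x + midDot n z x := by
  rw [midDot_comm, midDot_add_right, midDot_comm n x y, midDot_comm n x z]

lemma midDot_smul_left (n : ℕ) (c : ℝ) (x y : Fin (n + 1) → ℝ) :
    midDot n (c • y) x = c * midDot n y x := by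
  rw [midDot_comm, midDot_smul_right, midDot_comm n x y]

lemma midDot_congr (n : ℕ) {x x' y y' : Fin (n + 1) → ℝ}
    (h : ∀ i, i ≠ 0 → i ≠ Fin.last n → x i = x' i)
    (h' : ∀ i, i ≠ 0 → i ≠ Fin.last n → y i = y' i) : midDot n x y = midDot n x' y' := by
  unfold midDot
  refine Finset.sum_congr rfl fun i _ => ?_
  split_ifs with hi
  · rw [h i hi.1 hi.2, h' i hi.1 hi.2]
  · rfl

lemma lorQ_eq (n : ℕ) (x : Fin (n + 1) → ℝ) :
    lorQ n x = 2 * x 0 * x (Fin.last n) + midDot n x x := by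
  unfold lorQ midDot
  simp only [pow_two]

lemma continuous_midDot (n : ℕ) {X : Type*} [TopologicalSpace X] {f g : X → Fin (n + 1) → ℝ}
    (hf : Continuous f) (hg : Continuous g) : Continuous fun t => midDot n (f t) (g t) := by
  unfold midDot
  refine continuous_finsetSum _ fun i _ => ?_
  split_ifs
  · fun_prop
  · fun_prop

/-- The unipotent element, as a function. -/
def uFun (n : ℕ) (x y : Fin (n + 1) → ℝ) : Fin (n + 1) → ℝ := fun i =>
  if i = 0 then y 0 - midDot n x y - midDot n x x / 2 * y (Fin.last n)
  else if i = Fin.last n then y (Fin.last n)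
  else y i + y (Fin.last n) * x i

lemma last_ne (n : ℕ) (hn : 2 ≤ n) : Fin.last n ≠ 0 := by
  intro h
  have := congrArg Fin.val h
  simp at this
  omega

lemma uFun_zero (n : ℕ) (x y : Fin (n + 1) → ℝ) :
    uFun n x y 0 = y 0 - midDot n x y - midDot n x x / 2 * y (Fin.last n) := by
  simp [uFun]

lemma uFun_last (n : ℕ) (hn : 2 ≤ n) (x y : Fin (n + 1) → ℝ) :
    uFun n x y (Fin.last n) = y (Fin.last n) := by
  simp [uFun, last_ne n hn]

lemma uFun_mid (n : ℕ) (x y : Fin (n + 1) → ℝ) (i : Fin (n + 1)) (h0 : i ≠ 0)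
    (hl : i ≠ Fin.last n) : uFun n x y i = y i + y (Fin.last n) * x i := by
  simp [uFun, h0, hl]

lemma uFun_dot (n : ℕ) (x y z : Fin (n + 1) → ℝ) :
    midDot n z (uFun n x y) = midDot n z y + y (Fin.last n) * midDot n z x := by
  rw [← midDot_smul_right, ← midDot_add_right]
  refine midDot_congr n (fun _ _ _ => rfl) fun i h0 hl => ?_
  rw [uFun_mid n x y i h0 hl]
  simp

lemma uFun_comp (n : ℕ) (hn : 2 ≤ n) (x x' y : Fin (n + 1) → ℝ) :
    uFun n x (uFun n x' y) = uFun n (x + x') y := by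
  ext i
  by_cases h0 : i = 0
  · subst h0
    rw [uFun_zero, uFun_zero, uFun_zero, uFun_last n hn, uFun_dot]
    simp only [midDot_add_left, midDot_add_right]
    rw [midDot_comm n x' x]
    ring
  by_cases hl : i = Fin.last n
  · subst hl
    simp only [uFun_last n hn]
  · rw [uFun_mid _ _ _ _ h0 hl, uFun_mid _ _ _ _ h0 hl, uFun_mid _ _ _ _ h0 hl, uFun_last n hn]
    simp only [Pi.add_apply]
    ring

lemma midDot_zero_left (n : ℕ) (x : Fin (n + 1) → ℝ) : midDot n 0 x = 0 := by
  simp [midDot]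

lemma uFun_id (n : ℕ) (y : Fin (n + 1) → ℝ) : uFun n 0 y = y := by
  ext i
  unfold uFun
  split_ifs with h h'
  · subst h; simp [midDot_zero_left]
  · subst h'; rfl
  · simp

lemma uFun_Q (n : ℕ) (hn : 2 ≤ n) (x y : Fin (n + 1) → ℝ) : lorQ n (uFun n x y) = lorQ n y := by
  rw [lorQ_eq, lorQ_eq, uFun_dot, uFun_zero, uFun_last n hn, midDot_comm n (uFun n x y) y,
    midDot_comm n (uFun n x y) x, uFun_dot, uFun_dot, midDot_comm n y x]
  ring

/-- The unipotent element, as a linear map. -/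
def uLin (n : ℕ) (x : Fin (n + 1) → ℝ) : (Fin (n + 1) → ℝ) →ₗ[ℝ] (Fin (n + 1) → ℝ) where
  toFun := uFun n x
  map_add' := by
    intro a b
    ext i
    simp only [uFun, midDot_add_right, Pi.add_apply]
    split_ifs <;> ring
  map_smul' := by
    intro c a
    ext i
    simp only [uFun, midDot_smul_right, Pi.smul_apply, smul_eq_mul, RingHom.id_apply]
    split_ifs <;> ring

/-- The unipotent element, as an element of the Lorentz group. -/
def uElt (n : ℕ) (hn : 2 ≤ n) (x : Fin (n + 1) → ℝ) : LorentzGrp n :=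
  ⟨⟨LinearMap.toMatrix' (uLin n x), LinearMap.toMatrix' (uLin n (-x)), by
      rw [← LinearMap.toMatrix'_comp, ← LinearMap.toMatrix'_id]
      congr 1
      refine LinearMap.ext fun y => ?_
      show uFun n x (uFun n (-x) y) = y
      rw [uFun_comp n hn, add_neg_cancel, uFun_id], by
      rw [← LinearMap.toMatrix'_comp, ← LinearMap.toMatrix'_id]
      congr 1
      refine LinearMap.ext fun y => ?_
      show uFun n (-x) (uFun n x y) = y
      rw [uFun_comp n hn, neg_add_cancel, uFun_id]⟩, by
    intro y
    show lorQ n ((LinearMap.toMatrix' (uLin n x)).mulVec y) = _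
    rw [LinearMap.toMatrix'_mulVec]
    exact uFun_Q n hn x y⟩

lemma lorAct_uElt (n : ℕ) (hn : 2 ≤ n) (x y : Fin (n + 1) → ℝ) :
    lorAct (uElt n hn x) y = uFun n x y := by
  show ((LinearMap.toMatrix' (uLin n x)).mulVec y) = _
  rw [LinearMap.toMatrix'_mulVec]
  rfl

lemma lor_ext {n : ℕ} {g h : LorentzGrp n} (H : ∀ x, lorAct g x = lorAct h x) : g = h := by
  apply Subtype.ext
  apply Units.ext
  apply Matrix.ext_of_mulVec_single
  intro i
  exact H _

lemma lorAct_mul {n : ℕ} (g h : LorentzGrp n) (x : Fin (n + 1) → ℝ) :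
    lorAct (g * h) x = lorAct g (lorAct h x) := by
  unfold lorAct
  rw [Matrix.mulVec_mulVec]
  rfl

lemma lorAct_one {n : ℕ} (x : Fin (n + 1) → ℝ) : lorAct (1 : LorentzGrp n) x = x := by
  simp [lorAct]

lemma lorAct_add {n : ℕ} (g : LorentzGrp n) (x y : Fin (n + 1) → ℝ) :
    lorAct g (x + y) = lorAct g x + lorAct g y := Matrix.mulVec_add _ _ _

lemma lorAct_neg {n : ℕ} (g : LorentzGrp n) (x : Fin (n + 1) → ℝ) :
    lorAct g (-x) = - lorAct g x := Matrix.mulVec_neg _ _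

lemma lorAct_Q {n : ℕ} (g : LorentzGrp n) (x : Fin (n + 1) → ℝ) :
    lorQ n (lorAct g x) = lorQ n x := g.2 x

lemma uElt_add (n : ℕ) (hn : 2 ≤ n) (x y : Fin (n + 1) → ℝ) :
    uElt n hn (x + y) = uElt n hn x * uElt n hn y :=
  lor_ext fun z => by rw [lorAct_mul, lorAct_uElt, lorAct_uElt, lorAct_uElt, uFun_comp n hn]

lemma uElt_zero (n : ℕ) (hn : 2 ≤ n) : uElt n hn 0 = 1 :=
  lor_ext fun z => by rw [lorAct_one, lorAct_uElt, uFun_id]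

lemma continuous_uLin (n : ℕ) {X : Type*} [TopologicalSpace X] {f : X → Fin (n + 1) → ℝ}
    (hf : Continuous f) : Continuous fun t => LinearMap.toMatrix' (uLin n (f t)) := by
  refine continuous_matrix fun i j => ?_
  simp only [LinearMap.toMatrix'_apply]
  show Continuous fun t => uFun n (f t) _ i
  unfold uFun
  have h1 := fun y : Fin (n + 1) → ℝ => continuous_midDot n hf (continuous_const (y := y))
  have h2 := continuous_midDot n hf hf
  split_ifs
  · exact (continuous_const.sub (h1 _)).sub ((h2.div_const _).mul continuous_const)
  · exact continuous_const
  · fun_prop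

lemma continuous_uElt (n : ℕ) (hn : 2 ≤ n) : Continuous (uElt n hn) := by
  refine Continuous.subtype_mk ?_ _
  rw [Units.continuous_iff]
  exact ⟨continuous_uLin n continuous_id, continuous_uLin n continuous_neg⟩

/-- A bounded set of Lorentz matrices. -/
def kSet (n : ℕ) : Set (LorentzGrp n) :=
  {g | ∀ i j, |(g : GL (Fin (n + 1)) ℝ).val i j| ≤ 1 ∧ |(g : GL (Fin (n + 1)) ℝ).inv i j| ≤ 1}

lemma isCompact_kSet (n : ℕ) : IsCompact (kSet n) := by
  let M := Matrix (Fin (n + 1)) (Fin (n + 1)) ℝ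
  let Box : Set M := Set.pi Set.univ fun _ => Set.pi Set.univ fun _ => Set.Icc (-1 : ℝ) 1
  have hBox : IsCompact Box :=
    isCompact_univ_pi fun _ => isCompact_univ_pi fun _ => isCompact_Icc
  have hQ : Continuous (lorQ n) := by
    have : lorQ n = fun x => 2 * x 0 * x (Fin.last n) + midDot n x x := funext (lorQ_eq n)
    rw [this]
    have := continuous_midDot n (continuous_id (X := Fin (n + 1) → ℝ)) continuous_id
    simp only [id] at this
    fun_prop
  let C : Set (M × M) := {p | p.1 * p.2 = 1 ∧ p.2 * p.1 = 1 ∧ ∀ x, lorQ n (p.1.mulVec x) = lorQ n x}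
  have hC : IsClosed C := by
    refine (isClosed_eq (by fun_prop) (by fun_prop)).inter
      ((isClosed_eq (by fun_prop) (by fun_prop)).inter ?_)
    have h3 : IsClosed {p : M × M | ∀ x, lorQ n (p.1.mulVec x) = lorQ n x} := by
     rw [show {p : M × M | ∀ x, lorQ n (p.1.mulVec x) = lorQ n x}
      = ⋂ x, {p : M × M | lorQ n (p.1.mulVec x) = lorQ n x} by ext; simp]
     refine isClosed_iInter fun x => isClosed_eq ?_ continuous_const
     exact hQ.comp (continuous_fst.matrix_mulVec continuous_const)
    exact h3
  have hK : IsCompact ((Box ×ˢ Box) ∩ C) := (hBox.prod hBox).inter_right hC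
  have := isCompact_iff_compactSpace.1 hK
  let f : ↥((Box ×ˢ Box) ∩ C) → LorentzGrp n := fun p =>
    ⟨⟨p.1.1, p.1.2, p.2.2.1, p.2.2.2.1⟩, p.2.2.2.2⟩
  have hf : Continuous f := by
    refine Continuous.subtype_mk ?_ _
    rw [Units.continuous_iff]
    exact ⟨continuous_fst.comp continuous_subtype_val, continuous_snd.comp continuous_subtype_val⟩
  convert isCompact_range hf
  ext g
  constructor
  · intro hg
    refine ⟨⟨(g.1.val, g.1.inv), ⟨⟨?_, ?_⟩, g.1.val_inv, g.1.inv_val, g.2⟩⟩, rfl⟩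
    · intro i _ j _
      exact abs_le.1 (hg i j).1
    · intro i _ j _
      exact abs_le.1 (hg i j).2
  · rintro ⟨p, rfl⟩ i j
    exact ⟨abs_le.2 (p.2.1.1 i trivial j trivial), abs_le.2 (p.2.1.2 i trivial j trivial)⟩

lemma lor_norm (n : ℕ) (hn : 2 ≤ n) (x : Fin (n + 1) → ℝ) :
    ∑ i, x i ^ 2 = lorQ n x + (x 0 - x (Fin.last n)) ^ 2 := by
  have h1 : ∑ i, x i ^ 2 = ∑ i, ((if i ≠ 0 ∧ i ≠ Fin.last n then x i ^ 2 else 0) +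
      ((if i = 0 then x i ^ 2 else 0) + (if i = Fin.last n then x i ^ 2 else 0))) := by
    refine Finset.sum_congr rfl fun i _ => ?_
    by_cases h0 : i = 0
    · subst h0; simp [(last_ne n hn).symm]
    · by_cases hl : i = Fin.last n
      · subst hl; simp [last_ne n hn]
      · simp [h0, hl]
  rw [h1, Finset.sum_add_distrib, Finset.sum_add_distrib]
  simp only [Finset.sum_ite_eq', Finset.mem_univ, if_true]
  unfold lorQ
  ring

lemma Q_add_base (n : ℕ) (hn : 2 ≤ n) (x : Fin (n + 1) → ℝ) :
    lorQ n (x + basePt n) = lorQ n x - 2 * (x 0 - x (Fin.last n)) - 2 := by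
  have : midDot n (x + basePt n) (x + basePt n) = midDot n x x := by
    refine midDot_congr n ?_ ?_ <;> intro i h0 hl <;> simp [basePt, h0, hl]
  rw [lorQ_eq, lorQ_eq, this]
  simp [basePt, last_ne n hn]
  ring

lemma lorAct_base_sq (n : ℕ) (hn : 2 ≤ n) (g : LorentzGrp n)
    (hg : lorAct g (basePt n) = basePt n ∨ lorAct g (basePt n) = - basePt n)
    (x : Fin (n + 1) → ℝ) : ∑ i, (lorAct g x) i ^ 2 = ∑ i, x i ^ 2 := by
  rw [lor_norm n hn, lor_norm n hn, lorAct_Q]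
  have key := lorAct_Q g (x + basePt n)
  rw [Q_add_base n hn, lorAct_add] at key
  rcases hg with hg | hg
  · rw [hg, Q_add_base n hn, lorAct_Q] at key
    congr 2
    linarith
  · have e : lorQ n (lorAct g x + -basePt n) = lorQ n (-lorAct g x + basePt n) := by
      have : lorAct g x + -basePt n = (-1 : ℝ) • (-lorAct g x + basePt n) := by
        ext i; simp [add_comm]
      rw [this, lorQ_eq, lorQ_eq, midDot_smul_left, midDot_smul_right]
      simp only [Pi.smul_apply, smul_eq_mul]
      ring
    have e2 : lorQ n (-lorAct g x) = lorQ n x := by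
      rw [← lorAct_neg, lorAct_Q, lorQ_eq, lorQ_eq, ← neg_one_smul ℝ x, midDot_smul_left,
        midDot_smul_right]
      simp only [Pi.smul_apply, smul_eq_mul]
      ring
    rw [hg, e, Q_add_base n hn, e2] at key
    simp only [Pi.neg_apply] at key
    have : (lorAct g x) 0 - (lorAct g x) (Fin.last n) = -(x 0 - x (Fin.last n)) := by linarith
    rw [this]
    ring

lemma entry_le (n : ℕ) (hn : 2 ≤ n) (g : LorentzGrp n)
    (hg : lorAct g (basePt n) = basePt n ∨ lorAct g (basePt n) = - basePt n)
    (i j : Fin (n + 1)) : |(g : GL (Fin (n + 1)) ℝ).val i j| ≤ 1 := by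
  have h := lorAct_base_sq n hn g hg (Pi.single j 1)
  have h1 : ∑ k, (Pi.single j (1 : ℝ) : Fin (n + 1) → ℝ) k ^ 2 = 1 := by
    rw [Finset.sum_eq_single j] <;> simp +contextual [Pi.single_apply]
  have h2 : ∀ k, lorAct g (Pi.single j 1) k = (g : GL (Fin (n + 1)) ℝ).val k j := by
    intro k
    simp [lorAct]
  rw [h1] at h
  have h3 := Finset.single_le_sum (f := fun k => (lorAct g (Pi.single j 1)) k ^ 2)
    (fun k _ => sq_nonneg _) (Finset.mem_univ i)
  rw [h] at h3
  simp only [h2] at h3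
  exact abs_le_one_iff_mul_self_le_one.2 (by nlinarith)

lemma mem_kSet (n : ℕ) (hn : 2 ≤ n) (g : LorentzGrp n)
    (hg : lorAct g (basePt n) = basePt n ∨ lorAct g (basePt n) = - basePt n) : g ∈ kSet n := by
  have hg' : lorAct g⁻¹ (basePt n) = basePt n ∨ lorAct g⁻¹ (basePt n) = - basePt n := by
    have e : lorAct g⁻¹ (lorAct g (basePt n)) = basePt n := by
      rw [← lorAct_mul, inv_mul_cancel, lorAct_one]
    rcases hg with hg | hg
    · rw [hg] at e; exact Or.inl e
    · rw [hg, lorAct_neg] at e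
      right
      rw [← e, neg_neg]
      rw [e]
  intro i j
  exact ⟨entry_le n hn g hg i j, entry_le n hn g⁻¹ hg' i j⟩

/-- Iwasawa decomposition. -/
lemma iwasawa (n : ℕ) (hn : 2 ≤ n) (A : ℝ → LorentzGrp n)
    (hA : ∀ (s : ℝ) (x : Fin (n + 1) → ℝ), lorAct (A s) x = fun i =>
      if i = 0 then Real.exp s * x 0
      else if i = Fin.last n then Real.exp (-s) * x (Fin.last n)
      else x i) (g : LorentzGrp n) :
    ∃ k ∈ kSet n, ∃ x s, g * A s * uElt n hn x = k := by
  set p := lorAct g⁻¹ (basePt n) with hp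
  have hgp : lorAct g p = basePt n := by rw [hp, ← lorAct_mul, mul_inv_cancel, lorAct_one]
  have hQ : lorQ n p = -2 := by
    rw [hp, lorAct_Q]
    have := Q_add_base n hn 0
    simp only [zero_add] at this
    rw [this]
    simp [lorQ_eq, midDot_zero_left]
  rw [lorQ_eq] at hQ
  have hmid : 0 ≤ midDot n p p := by
    unfold midDot
    refine Finset.sum_nonneg fun i _ => ?_
    split_ifs
    · exact mul_self_nonneg _
    · exact le_rfl
  have hpl : p (Fin.last n) ≠ 0 := by
    intro h; rw [h] at hQ; linarith
  obtain ⟨ε, hε, hεl⟩ : ∃ ε : ℝ, (ε = 1 ∨ ε = -1) ∧ ε * p (Fin.last n) < 0 := by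
    rcases lt_or_gt_of_ne hpl with h | h
    · exact ⟨1, Or.inl rfl, by linarith⟩
    · exact ⟨-1, Or.inr rfl, by linarith⟩
  have hε2 : ε * ε = 1 := by rcases hε with h | h <;> rw [h] <;> norm_num
  set c := -(ε * p (Fin.last n)) with hc
  have hc0 : 0 < c := by linarith
  -- exp(-s) = c
  have key : lorAct (A (-Real.log c)) (lorAct (uElt n hn (-(ε • p))) (basePt n)) = ε • p := by
    rw [lorAct_uElt, hA]
    ext i
    by_cases h0 : i = 0
    · subst h0
      simp only [if_true, uFun_zero]
      have d1 : midDot n (-(ε • p)) (basePt n) = 0 := by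
        unfold midDot
        refine Finset.sum_eq_zero fun i _ => ?_
        split_ifs with hi
        · simp [basePt, hi.1, hi.2]
        · rfl
      have d2 : midDot n (-(ε • p)) (-(ε • p)) = midDot n p p := by
        rw [← smul_neg, midDot_smul_left, midDot_smul_right, ← neg_one_smul ℝ p, midDot_smul_left,
          midDot_smul_right]
        linear_combination midDot n p p * hε2
      rw [d1, d2, Real.exp_neg, Real.exp_log hc0]
      simp only [basePt, if_true, last_ne n hn, if_false, Pi.smul_apply, smul_eq_mul]
      field_simp
      rw [hc]
      linear_combination (2 * p 0 * p (Fin.last n)) * hε2 + hQ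
    by_cases hl : i = Fin.last n
    · subst hl
      simp only [if_true, uFun_last n hn, last_ne n hn, if_false, neg_neg, Real.exp_log hc0]
      simp [basePt, last_ne n hn, hc]
    · simp only [h0, hl, if_false, uFun_mid n _ _ i h0 hl]
      simp [basePt, h0, hl, last_ne n hn]
  refine ⟨_, mem_kSet n hn _ ?_, -(ε • p), -Real.log c, rfl⟩
  rw [lorAct_mul, lorAct_mul, key]
  rcases hε with h | h
  · left; rw [h, one_smul, hgp]
  · right; rw [h, neg_one_smul, lorAct_neg, hgp]

lemma A_conj (n : ℕ) (hn : 2 ≤ n) (A : ℝ → LorentzGrp n)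
    (hA : ∀ (s : ℝ) (x : Fin (n + 1) → ℝ), lorAct (A s) x = fun i =>
      if i = 0 then Real.exp s * x 0
      else if i = Fin.last n then Real.exp (-s) * x (Fin.last n)
      else x i) (s : ℝ) (x : Fin (n + 1) → ℝ) :
    A s * uElt n hn x = uElt n hn (Real.exp s • x) * A s := by
  refine lor_ext fun y => ?_
  rw [lorAct_mul, lorAct_mul, lorAct_uElt, lorAct_uElt]
  have hm : midDot n x (lorAct (A s) y) = midDot n x y := by
    refine midDot_congr n (fun _ _ _ => rfl) fun i h0 hl => ?_
    rw [hA]; simp [h0, hl]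
  have a0 : ∀ y, lorAct (A s) y 0 = Real.exp s * y 0 := fun y => by rw [hA]; simp
  have al : ∀ y, lorAct (A s) y (Fin.last n) = Real.exp (-s) * y (Fin.last n) := fun y => by
    rw [hA]; simp [last_ne n hn]
  have ee : Real.exp s * Real.exp (-s) = 1 := by rw [← Real.exp_add]; simp
  ext i
  by_cases h0 : i = 0
  · subst h0
    rw [a0, uFun_zero, uFun_zero, a0, al, midDot_smul_left, midDot_smul_left, midDot_smul_right, hm]
    linear_combination (Real.exp s * midDot n x x / 2 * y (Fin.last n)) * ee
  by_cases hl : i = Fin.last n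
  · subst hl
    rw [al, uFun_last n hn, uFun_last n hn, al]
  · rw [uFun_mid n _ _ i h0 hl, al, hA, hA]
    simp only [h0, hl, if_false, uFun_mid n _ _ i h0 hl, Pi.smul_apply, smul_eq_mul]
    linear_combination (-(y (Fin.last n) * x i)) * ee

lemma A_add (n : ℕ) (hn : 2 ≤ n) (A : ℝ → LorentzGrp n)
    (hA : ∀ (s : ℝ) (x : Fin (n + 1) → ℝ), lorAct (A s) x = fun i =>
      if i = 0 then Real.exp s * x 0
      else if i = Fin.last n then Real.exp (-s) * x (Fin.last n)
      else x i) (s t : ℝ) : A (s + t) = A s * A t := by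
  refine lor_ext fun y => ?_
  rw [lorAct_mul, hA, hA, hA]
  ext i
  by_cases h0 : i = 0
  · subst h0
    simp [Real.exp_add, mul_assoc]
  by_cases hl : i = Fin.last n
  · subst hl
    simp only [last_ne n hn, if_false, if_true]
    rw [neg_add, Real.exp_add, mul_assoc]
  · simp [h0, hl]

/-- Let `n ≥ 2` and let `ρ` be a continuous representation of `O(1,n)` on a
finite-dimensional real normed vector space `V`. If `w ∈ V` is fixed by the Cartan subgroup
`A = {a^s}` (where `a^s e₁ = e^s e₁`, `a^s e_{n+1} = e^{-s} e_{n+1}`, `a^s eᵢ = eᵢ` otherwise),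
then the orbit `{ρ(g) w : g ∈ O(1,n)}` is closed in `V`. -/
theorem orbit_closed_of_cartan_fixed
    (n : ℕ) (hn : 2 ≤ n)
    (V : Type*) [NormedAddCommGroup V] [NormedSpace ℝ V] [FiniteDimensional ℝ V]
    (ρ : LorentzGrp n →* (V →L[ℝ] V)) (hρ : Continuous fun g => ρ g)
    (A : ℝ → LorentzGrp n)
    (hA : ∀ (s : ℝ) (x : Fin (n + 1) → ℝ), lorAct (A s) x = fun i =>
      if i = 0 then Real.exp s * x 0
      else if i = Fin.last n then Real.exp (-s) * x (Fin.last n)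
      else x i)
    (w : V) (hw : ∀ s : ℝ, ρ (A s) w = w) :
    IsClosed {v : V | ∃ g : LorentzGrp n, v = ρ g w} := by
  have rmul : ∀ (g h : LorentzGrp n) (v : V), ρ (g * h) v = ρ g (ρ h v) := by
    intro g h v; rw [map_mul]; rfl
  have rinv : ∀ (g : LorentzGrp n) (v : V), ρ g⁻¹ (ρ g v) = v := by
    intro g v; rw [← rmul, inv_mul_cancel, map_one]; rfl
  let u := uElt n hn
  let P : (Fin (n + 1) → ℝ) → V := fun x => ρ (u x) w
  have hPc : Continuous P := (hρ.comp (continuous_uElt n hn)).clm_apply continuous_const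
  have hP0 : P 0 = w := by
    show ρ (uElt n hn 0) w = w
    rw [uElt_zero, map_one]; rfl
  have hPadd : ∀ x y, P (x + y) = ρ (u x) (P y) := by
    intro x y
    show ρ (uElt n hn (x + y)) w = _
    rw [uElt_add, rmul]
  have hPA : ∀ s x, ρ (A s) (P x) = P (Real.exp s • x) := by
    intro s x
    show ρ (A s) (ρ (uElt n hn x) w) = ρ (uElt n hn (Real.exp s • x)) w
    rw [← rmul, A_conj n hn A hA, rmul, hw]
  -- the stabiliser directions
  have hEpos : ∀ (c : ℝ) x, 0 < c → P x = w → P (c • x) = w := by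
    intro c x hc hx
    have := hPA (Real.log c) x
    rw [hx, hw, Real.exp_log hc] at this
    exact this.symm
  have hEneg : ∀ x, P x = w → P (-x) = w := by
    intro x hx
    have := hPadd (-x) x
    rw [neg_add_cancel, hx, hP0] at this
    exact this.symm
  let E : Submodule ℝ (Fin (n + 1) → ℝ) :=
    { carrier := {x | P x = w}
      zero_mem' := hP0
      add_mem' := by
        intro a b ha hb
        show P (a + b) = w
        rw [hPadd, show P b = w from hb]
        exact ha
      smul_mem' := by
        intro c x hx
        show P (c • x) = w
        rcases lt_trichotomy c 0 with h | h | h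
        · have := hEneg _ (hEpos (-c) x (by linarith) hx)
          rwa [neg_smul, neg_neg] at this
        · rw [h, zero_smul, hP0]
        · exact hEpos c x h hx }
  obtain ⟨F, hF⟩ := E.exists_isCompl
  have hFcl : IsClosed (F : Set (Fin (n + 1) → ℝ)) := F.closed_of_finiteDimensional
  let T : V →L[ℝ] V := ρ (A (-1))
  have hTP : ∀ (m : ℕ) x, (T ^ m) (P x) = P (Real.exp (-m) • x) := by
    intro m x
    induction m with
    | zero => simp
    | succ m ih =>
      rw [pow_succ']
      show T ((T ^ m) (P x)) = _
      rw [ih]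
      show ρ (A (-1)) _ = _
      rw [hPA, smul_smul, ← Real.exp_add]
      congr 3
      push_cast
      ring
  have hTw : ∀ m : ℕ, (T ^ m) w = w := by
    intro m
    have := hTP m 0
    rwa [smul_zero, hP0] at this
  -- properness
  have proper : ∀ R : ℝ, ∃ C : ℝ, ∀ f ∈ F, ‖P f‖ ≤ R → ‖f‖ ≤ C := by
    intro R
    by_contra hcon
    push Not at hcon
    choose f hfF hfR hfC using fun k : ℕ => hcon (Real.exp k)
    let m : ℕ → ℕ := fun k => ⌊Real.log ‖f k‖⌋₊
    have hfpos : ∀ k, 0 < ‖f k‖ := fun k => (Real.exp_pos _).trans (hfC k)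
    have hlog : ∀ k : ℕ, (k : ℝ) ≤ Real.log ‖f k‖ := fun k =>
      (Real.le_log_iff_exp_le (hfpos k)).2 (hfC k).le
    have hmk : ∀ k, k ≤ m k := fun k => Nat.le_floor (hlog k)
    have hm : Tendsto m atTop atTop := tendsto_atTop_mono hmk tendsto_id
    let θ : ℕ → Fin (n + 1) → ℝ := fun k => Real.exp (-(m k)) • f k
    have hθn : ∀ k, ‖θ k‖ = Real.exp (Real.log ‖f k‖ - m k) := by
      intro k
      show ‖Real.exp (-(m k)) • f k‖ = _
      rw [norm_smul, Real.norm_eq_abs, abs_of_pos (Real.exp_pos _), sub_eq_neg_add, Real.exp_add,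
        Real.exp_log (hfpos k)]
    have hθ1 : ∀ k, 1 ≤ ‖θ k‖ := by
      intro k
      rw [hθn]
      have := Nat.floor_le ((Nat.cast_nonneg k).trans (hlog k))
      exact Real.one_le_exp (by simpa [m] using this)
    have hθ2 : ∀ k, ‖θ k‖ ≤ Real.exp 1 := by
      intro k
      rw [hθn]
      have := Nat.lt_floor_add_one (Real.log ‖f k‖)
      refine Real.exp_le_exp.2 ?_
      show Real.log ‖f k‖ - (⌊Real.log ‖f k‖⌋₊ : ℝ) ≤ 1
      linarith
    obtain ⟨t, -, φ, hφ, hlim⟩ := (isCompact_closedBall (0 : Fin (n + 1) → ℝ) (Real.exp 1)).tendsto_subseq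
      (x := θ) (fun k => by simpa using hθ2 k)
    have htF : t ∈ F := hFcl.mem_of_tendsto hlim
      (Eventually.of_forall fun k => F.smul_mem _ (hfF _))
    have ht1 : 1 ≤ ‖t‖ := ge_of_tendsto' hlim.norm fun k => hθ1 _
    have hz : P t - w = 0 := by
      refine aux_lin T (fun k => P (f (φ k)) - w) (R + ‖w‖) (fun k => ?_) (fun k => m (φ k))
        (hm.comp hφ.tendsto_atTop) _ ?_ ?_
      · exact (norm_sub_le _ _).trans (by have := hfR (φ k); linarith)
      · have : Tendsto (fun k => P (θ (φ k)) - w) atTop (𝓝 (P t - w)) :=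
          ((hPc.tendsto t).comp hlim).sub_const w
        refine this.congr fun k => ?_
        rw [map_sub, hTw, hTP]
      · have h0 : Tendsto (fun j : ℕ => Real.exp (-(j : ℝ)) • t) atTop (𝓝 0) := by
          have : Tendsto (fun j : ℕ => Real.exp (-(j : ℝ))) atTop (𝓝 0) :=
            Real.tendsto_exp_neg_atTop_nhds_zero.comp tendsto_natCast_atTop_atTop
          simpa using this.smul_const t
        have h1 : Tendsto (fun j : ℕ => P (Real.exp (-(j : ℝ)) • t) - w) atTop (𝓝 (P 0 - w)) :=
          ((hPc.tendsto 0).comp h0).sub_const w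
        rw [hP0, sub_self] at h1
        refine h1.congr fun j => ?_
        rw [map_sub, hTw, hTP]
    have htE : t ∈ E := sub_eq_zero.1 hz
    have : t = 0 := by
      have := hF.disjoint.le_bot (show t ∈ E ⊓ F from ⟨htE, htF⟩)
      simpa using this
    rw [this, norm_zero] at ht1
    linarith
  -- decomposition of the orbit
  have hdec : ∀ g : LorentzGrp n, ∃ k ∈ kSet n, ∃ f ∈ F, ρ g w = ρ k (P f) := by
    intro g
    obtain ⟨k, hk, x, s, hg⟩ := iwasawa n hn A hA g
    have h1 : g = k * u (-x) * A (-s) := by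
      have e1 : u x * u (-x) = 1 := by
        show uElt n hn x * uElt n hn (-x) = 1
        rw [← uElt_add, add_neg_cancel, uElt_zero]
      have e2 : A s * A (-s) = 1 := by
        rw [← A_add n hn A hA, add_neg_cancel]
        refine lor_ext fun y => ?_
        rw [hA, lorAct_one]
        ext i
        split_ifs with h h' <;> simp [*]
      rw [← hg]
      change g = g * A s * u x * u (-x) * A (-s)
      rw [mul_assoc (g * A s), e1, mul_one, mul_assoc, e2, mul_one]
    have hx : -x ∈ E ⊔ F := by rw [hF.sup_eq_top]; trivial
    obtain ⟨e, he, f, hf, hef⟩ := Submodule.mem_sup.1 hx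
    refine ⟨k, hk, f, hf, ?_⟩
    rw [h1, rmul, hw, rmul]
    congr 1
    show P (-x) = P f
    rw [← hef, add_comm, hPadd, show P e = w from he]
  have hKc := isCompact_kSet n
  -- bound of the inverse on the compact part
  obtain ⟨B, hB⟩ : ∃ B : ℝ, ∀ k ∈ kSet n, ‖ρ k⁻¹‖ ≤ B := by
    have hc : Continuous fun g : LorentzGrp n => ‖ρ g⁻¹‖ := (hρ.comp continuous_inv).norm
    obtain ⟨B, hB⟩ := (hKc.image hc).bddAbove
    exact ⟨B, fun k hk => hB ⟨k, hk, rfl⟩⟩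
  refine isClosed_of_closure_subset fun v hv => ?_
  obtain ⟨C, hC⟩ := proper (B * (‖v‖ + 1))
  let Z : Set V := (fun p : LorentzGrp n × (Fin (n + 1) → ℝ) => ρ p.1 (P p.2)) ''
    (kSet n ×ˢ Metric.closedBall 0 C)
  have hZ : IsCompact Z := by
    refine (hKc.prod (isCompact_closedBall _ _)).image ?_
    exact (hρ.comp continuous_fst).clm_apply (hPc.comp continuous_snd)
  have hsub : {v : V | ∃ g : LorentzGrp n, v = ρ g w} ∩ Metric.ball v 1 ⊆ Z := by
    rintro y ⟨⟨g, rfl⟩, hy⟩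
    obtain ⟨k, hk, f, hf, hg⟩ := hdec g
    refine ⟨(k, f), ⟨hk, ?_⟩, hg.symm⟩
    rw [mem_closedBall_zero_iff]
    refine hC f hf ?_
    have e : P f = ρ k⁻¹ (ρ g w) := by rw [hg, rinv]
    have hn1 : ‖ρ g w‖ ≤ ‖v‖ + 1 := by
      rw [mem_ball_iff_norm] at hy
      have := norm_le_norm_add_norm_sub v (ρ g w)
      rw [norm_sub_rev] at this
      linarith
    rw [e]
    refine ((ρ k⁻¹).le_opNorm _).trans ?_
    exact mul_le_mul (hB k hk) hn1 (norm_nonneg _) ((norm_nonneg _).trans (hB k hk))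
  have hvZ : v ∈ Z := by
    have h1 := Metric.isOpen_ball.inter_closure (s := Metric.ball v 1)
      (t := {v : V | ∃ g : LorentzGrp n, v = ρ g w}) ⟨Metric.mem_ball_self one_pos, hv⟩
    rw [Set.inter_comm] at h1
    exact hZ.isClosed.closure_subset_iff.2 hsub h1
  obtain ⟨⟨k, f⟩, -, rfl⟩ := hvZ
  exact ⟨k * u f, (rmul _ _ _).symm⟩
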